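/- Let (L₀, L₂) and (L₀′, L₂′) be pairs of τ-stable lattices with L₀ = L₀^⊥, L₀′ = (L₀′)^⊥, L₂ = pL₂^⊥, L₂′ = p(L₂′)^⊥, L₂ ⊆ L₀, L₂′ ⊆ L₀′, and (L₀, L₂) ≠ (L₀′, L₂′). If M ∈ ℳ(𝔽) satisfies L₂ ⊆ M ⊆ L₀ and L₂′ ⊆ M ⊆ L₀′, then M is τ-stable (hence superspecial); moreover if L₀ ≠ L₀′ then M = L₀ ∩ L₀′, and if L₂ ≠ L₂′ then M = L₂ + L₂′. -/

import Mathlib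

open Pointwise

noncomputable section

variable (p : ℕ) [Fact p.Prime] (𝔽 : Type) [Field 𝔽] [IsAlgClosed 𝔽] [CharP 𝔽 p]

/-- The Witt ring `W(𝔽)`. -/
abbrev Wp := WittVector p 𝔽

/-- The fraction field `K` of `W(𝔽)`. -/
abbrev Kp := FractionRing (Wp p 𝔽)

/-- `N = K⁴`. -/
abbrev Nn := Fin 4 → Kp p 𝔽

variable (σ : Kp p 𝔽 ≃+* Kp p 𝔽)
variable (B : LinearMap.BilinForm (Kp p 𝔽) (Nn p 𝔽))
variable (F : Nn p 𝔽 → Nn p 𝔽)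

/-- `σ` is the automorphism of `K` induced by the Witt-vector Frobenius. -/
def IsWittFrobenius : Prop :=
  ∀ w : Wp p 𝔽, σ (algebraMap (Wp p 𝔽) (Kp p 𝔽) w)
    = algebraMap (Wp p 𝔽) (Kp p 𝔽) (WittVector.frobeniusEquiv p 𝔽 w)

/-- `F` is a `σ`-semilinear bijection of `N` with `⟨Fx, Fy⟩ = p·σ(⟨x, y⟩)`. -/
def IsFrobeniusMap : Prop :=
  Function.Bijective F ∧ (∀ x y, F (x + y) = F x + F y) ∧
  (∀ (c : Kp p 𝔽) (x : Nn p 𝔽), F (c • x) = σ c • F x) ∧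
  (∀ x y, B (F x) (F y) = (p : Kp p 𝔽) * σ (B x y))

/-- The Verschiebung `V = p·F⁻¹`. -/
def Vmap : Nn p 𝔽 → Nn p 𝔽 := fun x => (p : Kp p 𝔽) • Function.invFun F x

/-- `τ = V⁻¹F = p⁻¹F²`. -/
def tauMap : Nn p 𝔽 → Nn p 𝔽 := fun x => ((p : Kp p 𝔽))⁻¹ • F (F x)

/-- The `W`-lattice `FM` generated by the image of `M` under `F`. -/
def FL (M : Submodule (Wp p 𝔽) (Nn p 𝔽)) : Submodule (Wp p 𝔽) (Nn p 𝔽) :=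
  Submodule.span (Wp p 𝔽) (F '' M)

/-- The `W`-lattice `VM` generated by the image of `M` under `V`. -/
def VL (M : Submodule (Wp p 𝔽) (Nn p 𝔽)) : Submodule (Wp p 𝔽) (Nn p 𝔽) :=
  Submodule.span (Wp p 𝔽) (Vmap p 𝔽 F '' M)

/-- The `W`-lattice `τM` generated by the image of `M` under `τ`. -/
def tauL (M : Submodule (Wp p 𝔽) (Nn p 𝔽)) : Submodule (Wp p 𝔽) (Nn p 𝔽) :=
  Submodule.span (Wp p 𝔽) (tauMap p 𝔽 F '' M)

/-- The dual lattice `M^⊥` with respect to the form `B`. -/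
def dualB (M : Submodule (Wp p 𝔽) (Nn p 𝔽)) : Submodule (Wp p 𝔽) (Nn p 𝔽) where
  carrier := {x | ∀ m ∈ M, B x m ∈ (algebraMap (Wp p 𝔽) (Kp p 𝔽)).range}
  zero_mem' := by
    intro m hm
    rw [map_zero, LinearMap.zero_apply]
    exact zero_mem _
  add_mem' := by
    intro x y hx hy m hm
    rw [map_add, LinearMap.add_apply]
    exact add_mem (hx m hm) (hy m hm)
  smul_mem' := by
    intro c x hx m hm
    rw [← algebraMap_smul (Kp p 𝔽) c x, map_smul, LinearMap.smul_apply, smul_eq_mul]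
    exact mul_mem ⟨c, rfl⟩ (hx m hm)

/-- `M` is a lattice in `N`: finitely generated over `W` and spanning `N` over `K`. -/
def IsLattice (M : Submodule (Wp p 𝔽) (Nn p 𝔽)) : Prop :=
  M.FG ∧ Submodule.span (Kp p 𝔽) (M : Set (Nn p 𝔽)) = ⊤

/-- The length of the `W`-module `B / A` (as the Krull dimension of its submodule
lattice). -/
def relLength (A B : Submodule (Wp p 𝔽) (Nn p 𝔽)) : WithBot ℕ∞ :=
  Order.krullDim (Submodule (Wp p 𝔽) (B ⧸ (A.comap B.subtype)))

/-- `A ⊂ᵈ B` : `A ⊆ B` with colength `d`. -/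
def SubD (d : ℕ) (A B : Submodule (Wp p 𝔽) (Nn p 𝔽)) : Prop :=
  A ≤ B ∧ relLength p 𝔽 A B = (d : WithBot ℕ∞)

/-- `a(M) = dim_𝔽 M/(FM + VM)`, as the `W`-length of `M/(FM + VM)`
(the quotient is killed by `p`, so its `W`-length equals its `𝔽`-dimension). -/
def aNum (M : Submodule (Wp p 𝔽) (Nn p 𝔽)) : WithBot ℕ∞ :=
  relLength p 𝔽 (FL p 𝔽 F M ⊔ VL p 𝔽 F M) M

/-- Membership in `ℳ(𝔽)`: `M` is a lattice with `pM ⊂² VM ⊂² M` and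
`pM^⊥ ⊂² M ⊂² M^⊥`. -/
def memM (M : Submodule (Wp p 𝔽) (Nn p 𝔽)) : Prop :=
  IsLattice p 𝔽 M ∧
  SubD p 𝔽 2 ((p : Wp p 𝔽) • M) (VL p 𝔽 F M) ∧
  SubD p 𝔽 2 (VL p 𝔽 F M) M ∧
  SubD p 𝔽 2 ((p : Wp p 𝔽) • dualB p 𝔽 B M) M ∧
  SubD p 𝔽 2 M (dualB p 𝔽 B M)

/-!
Duality `L ↦ L^⊥` reverses inclusions, so two distinct fixed points of it are incomparable. If both
contain `M` they lie in the interval `[M, M^⊥]`, which has length two; there `L₀ ∩ L₀'`, `L₀` and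
`L₀ + L₀'` form a strict chain, so `L₀ ∩ L₀'` must be the bottom `M`. The same argument for
`L ↦ pL^⊥` in the interval `[pM^⊥, M]` gives `L₂ + L₂' = M`. In either case `M` is an intersection
or a sum of `τ`-stable lattices, and these are `τ`-stable because `τ` is injective and additive.
-/

theorem three_le_krullDim_Icc {α : Type*} [Preorder α] {l u a b c d : α} (hla : l ≤ a)
    (hab : a < b) (hbc : b < c) (hcd : c < d) (hdu : d ≤ u) :
    3 ≤ Order.krullDim (Set.Icc l u) := by
  have hbu : b ≤ u := hbc.le.trans (hcd.le.trans hdu)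
  have hlc : l ≤ c := hla.trans (hab.le.trans hbc.le)
  let chain : LTSeries (Set.Icc l u) :=
    { length := 3
      toFun := ![⟨a, hla, hab.le.trans hbu⟩, ⟨b, hla.trans hab.le, hbu⟩,
        ⟨c, hlc, hcd.le.trans hdu⟩, ⟨d, hlc.trans hcd.le, hdu⟩]
      step := by
        intro i
        fin_cases i
        exacts [hab, hbc, hcd] }
  exact Order.LTSeries.length_le_krullDim chain

theorem isAntichain_fixedPoints {α : Type*} [PartialOrder α] {δ : α → α} (hδ : Antitone δ) :
    IsAntichain (· ≤ ·) (Function.fixedPoints δ) := by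
  intro a ha b hb hne hab
  have hba : δ b ≤ δ a := hδ hab
  rw [ha.eq, hb.eq] at hba
  exact hne (hab.antisymm hba)

theorem inf_eq_and_sup_eq_of_krullDim_Icc_le_two {α : Type*} [Lattice α] {l u a b : α}
    (hdim : Order.krullDim (Set.Icc l u) ≤ 2) (hl : l ≤ a ⊓ b) (hu : a ⊔ b ≤ u)
    (hab : ¬ a ≤ b) (hba : ¬ b ≤ a) : a ⊓ b = l ∧ a ⊔ b = u := by
  have hinf : a ⊓ b < a := inf_lt_left.2 hab
  have hsup : a < a ⊔ b := left_lt_sup.2 hba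
  have hdim_ne : ¬ 3 ≤ Order.krullDim (Set.Icc l u) := fun h =>
    absurd (h.trans hdim) (by decide)
  constructor
  · by_contra hne
    exact hdim_ne (three_le_krullDim_Icc le_rfl (hl.lt_of_ne' hne) hinf hsup hu)
  · by_contra hne
    exact hdim_ne (three_le_krullDim_Icc hl hinf hsup (hu.lt_of_ne hne) le_rfl)

theorem eq_inf_of_isFixedPt {α : Type*} [Lattice α] {δ : α → α} (hδ : Antitone δ) {m a b : α}
    (ha : Function.IsFixedPt δ a) (hb : Function.IsFixedPt δ b) (hab : a ≠ b) (hma : m ≤ a)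
    (hmb : m ≤ b) (hdim : Order.krullDim (Set.Icc m (δ m)) ≤ 2) : m = a ⊓ b :=
  have hδm : a ⊔ b ≤ δ m := sup_le (ha.eq ▸ hδ hma) (hb.eq ▸ hδ hmb)
  have hanti := isAntichain_fixedPoints hδ
  (inf_eq_and_sup_eq_of_krullDim_Icc_le_two hdim (le_inf hma hmb) hδm (hanti ha hb hab)
    (hanti hb ha hab.symm)).1.symm

theorem eq_sup_of_isFixedPt {α : Type*} [Lattice α] {δ : α → α} (hδ : Antitone δ) {m a b : α}
    (ha : Function.IsFixedPt δ a) (hb : Function.IsFixedPt δ b) (hab : a ≠ b) (ham : a ≤ m)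
    (hbm : b ≤ m) (hdim : Order.krullDim (Set.Icc (δ m) m) ≤ 2) : m = a ⊔ b :=
  have hδm : δ m ≤ a ⊓ b := le_inf (ha.eq ▸ hδ ham) (hb.eq ▸ hδ hbm)
  have hanti := isAntichain_fixedPoints hδ
  (inf_eq_and_sup_eq_of_krullDim_Icc_le_two hdim hδm (sup_le ham hbm) (hanti ha hb hab)
    (hanti hb ha hab.symm)).2.symm

theorem krullDim_submodule_quotient_eq_krullDim_Icc {R N : Type*} [Ring R] [AddCommGroup N]
    [Module R N] {X Y : Submodule R N} (hXY : X ≤ Y) :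
    Order.krullDim (Submodule R (Y ⧸ X.comap Y.subtype)) = Order.krullDim (Set.Icc X Y) := by
  have map_comap_of_le {Z : Submodule R N} (hZ : Z ≤ Y) :
      (Z.comap Y.subtype).map Y.subtype = Z := by
    rw [Submodule.map_comap_subtype, inf_eq_right.2 hZ]
  let mapIci : Set.Ici (X.comap Y.subtype) ≃o Set.Icc X Y :=
    { toFun := fun Z => ⟨Z.1.map Y.subtype,
        (map_comap_of_le hXY).ge.trans (Submodule.map_mono Z.2), Submodule.map_subtype_le Y Z⟩
      invFun := fun Z => ⟨Z.1.comap Y.subtype, Submodule.comap_mono Z.2.1⟩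
      left_inv := fun Z => Subtype.ext <|
        Submodule.comap_map_eq_of_injective Y.injective_subtype Z.1
      right_inv := fun Z => Subtype.ext <| map_comap_of_le Z.2.2
      map_rel_iff' := Submodule.map_le_map_iff_of_injective Y.injective_subtype _ _ }
  exact Order.krullDim_eq_of_orderIso ((Submodule.comapMkQRelIso _).trans mapIci)

theorem map_map_eq_smul_map {R N : Type*} [CommSemiring R] [AddCommMonoid N] [Module R N]
    {φ ψ : R →+* R} [RingHomSurjective φ] [RingHomSurjective ψ] {f : N →ₛₗ[φ] N} {τ : N →ₛₗ[ψ] N}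
    {π : R} (hτ : ∀ x, π • τ x = f (f x)) (M : Submodule R N) :
    (M.map f).map f = π • M.map τ := by
  apply SetLike.coe_injective
  simp only [Submodule.map_coe, Submodule.coe_pointwise_smul, ← Set.image_smul, Set.image_image, hτ]

section DualSubmodule

variable {R S N : Type*} [CommRing R] [Field S] [AddCommGroup N]
variable [Algebra R S] [Module R N] [Module S N] [IsScalarTower R S N]

theorem antitone_dualSubmodule (B : LinearMap.BilinForm S N) :
    Antitone (B.dualSubmodule : Submodule R N → Submodule R N) :=
  fun _ _ hXY _ hx y hy => hx y (hXY hy)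

theorem antitone_smul_dualSubmodule (B : LinearMap.BilinForm S N) (π : R) :
    Antitone fun L : Submodule R N => π • B.dualSubmodule L :=
  fun _ _ hXY => Submodule.map_mono (antitone_dualSubmodule B hXY)

theorem intersection_of_paramodular_strata_general (B : LinearMap.BilinForm S N)
    {φ ψ : R →+* R} [RingHomSurjective φ] [RingHomSurjective ψ]
    {f : N →ₛₗ[φ] N} (hf : Function.Injective f) {τ : N →ₛₗ[ψ] N} {π : R}
    (hτ : ∀ x, π • τ x = f (f x)) {L₀ L₂ L₀' L₂' M : Submodule R N}
    (hτ₀ : L₀.map τ = L₀) (hδ₀ : L₀ = B.dualSubmodule L₀)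
    (hτ₀' : L₀'.map τ = L₀') (hδ₀' : L₀' = B.dualSubmodule L₀')
    (hτ₂ : L₂.map τ = L₂) (hδ₂ : L₂ = π • B.dualSubmodule L₂)
    (hτ₂' : L₂'.map τ = L₂') (hδ₂' : L₂' = π • B.dualSubmodule L₂')
    (hne : (L₀, L₂) ≠ (L₀', L₂'))
    (hdim : Order.krullDim (Set.Icc M (B.dualSubmodule M)) ≤ 2)
    (hdim' : Order.krullDim (Set.Icc (π • B.dualSubmodule M) M) ≤ 2)
    (h₂ : L₂ ≤ M) (h₀ : M ≤ L₀) (h₂' : L₂' ≤ M) (h₀' : M ≤ L₀') :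
    M.map τ = M ∧ (M.map f).map f = π • M ∧ (L₀ ≠ L₀' → M = L₀ ⊓ L₀') ∧
      (L₂ ≠ L₂' → M = L₂ ⊔ L₂') := by
  have hinf : L₀ ≠ L₀' → M = L₀ ⊓ L₀' := fun h =>
    eq_inf_of_isFixedPt (antitone_dualSubmodule B) hδ₀.symm hδ₀'.symm h h₀ h₀' hdim
  have hsup : L₂ ≠ L₂' → M = L₂ ⊔ L₂' := fun h =>
    eq_sup_of_isFixedPt (antitone_smul_dualSubmodule B π) hδ₂.symm hδ₂'.symm h h₂ h₂' hdim'
  have hτ_inj : Function.Injective τ := fun x y hxy => hf (hf (by rw [← hτ, ← hτ, hxy]))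
  have hτM : M.map τ = M := by
    by_cases h : L₀ = L₀'
    · rw [hsup fun h' => hne (Prod.ext h h'), Submodule.map_sup, hτ₂, hτ₂']
    · rw [hinf h, Submodule.map_inf τ hτ_inj, hτ₀, hτ₀']
  exact ⟨hτM, by rw [map_map_eq_smul_map hτ, hτM], hinf, hsup⟩

end DualSubmodule

variable {p 𝔽 σ B F}

omit [IsAlgClosed 𝔽] [CharP 𝔽 p] in
theorem SubD.krullDim_Icc {d : ℕ} {X Y : Submodule (Wp p 𝔽) (Nn p 𝔽)} (h : SubD p 𝔽 d X Y) :
    Order.krullDim (Set.Icc X Y) = d :=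
  (krullDim_submodule_quotient_eq_krullDim_Icc h.1).symm.trans h.2

omit [IsAlgClosed 𝔽] in
theorem dualB_eq_dualSubmodule (M : Submodule (Wp p 𝔽) (Nn p 𝔽)) :
    dualB p 𝔽 B M = B.dualSubmodule M := by
  ext x
  simp only [LinearMap.BilinForm.mem_dualSubmodule, Submodule.mem_one]
  rfl

theorem IsWittFrobenius.map_smul {f : Nn p 𝔽 → Nn p 𝔽} (hσ : IsWittFrobenius p 𝔽 σ)
    (hf : ∀ (c : Kp p 𝔽) (x : Nn p 𝔽), f (c • x) = σ c • f x) (w : Wp p 𝔽) (x : Nn p 𝔽) :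
    f (w • x) = WittVector.frobeniusEquiv p 𝔽 w • f x := by
  rw [← algebraMap_smul (Kp p 𝔽) w, hf, hσ, algebraMap_smul]

/-- `F` as a map semilinear over the Witt-vector Frobenius of `W` rather than over `σ`, so that the
lattice `FM` is an instance of `Submodule.map`. -/
def IsFrobeniusMap.semilinearMap (hσ : IsWittFrobenius p 𝔽 σ) (hF : IsFrobeniusMap p 𝔽 σ B F) :
    Nn p 𝔽 →ₛₗ[(WittVector.frobeniusEquiv p 𝔽 : Wp p 𝔽 →+* Wp p 𝔽)] Nn p 𝔽 where
  toFun := F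
  map_add' := hF.2.1
  map_smul' := hσ.map_smul hF.2.2.1

theorem IsFrobeniusMap.tauMap_smul (hσ : IsWittFrobenius p 𝔽 σ) (hF : IsFrobeniusMap p 𝔽 σ B F)
    (w : Wp p 𝔽) (x : Nn p 𝔽) :
    tauMap p 𝔽 F (w • x) =
      WittVector.frobeniusEquiv p 𝔽 (WittVector.frobeniusEquiv p 𝔽 w) • tauMap p 𝔽 F x := by
  have hF_smul := hσ.map_smul hF.2.2.1
  simp only [tauMap, hF_smul, smul_comm _ (p : Kp p 𝔽)⁻¹]

/-- The slope operator `τ = p⁻¹F²` as a map semilinear over the square of the Witt-vector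
Frobenius of `W`, so that the lattice `τM` is an instance of `Submodule.map`. -/
def IsFrobeniusMap.tauSemilinearMap (hσ : IsWittFrobenius p 𝔽 σ)
    (hF : IsFrobeniusMap p 𝔽 σ B F) :
    Nn p 𝔽 →ₛₗ[((WittVector.frobeniusEquiv p 𝔽).trans (WittVector.frobeniusEquiv p 𝔽) :
      Wp p 𝔽 →+* Wp p 𝔽)] Nn p 𝔽 where
  toFun := tauMap p 𝔽 F
  map_add' x y := by simp only [tauMap, hF.2.1, smul_add]
  map_smul' := hF.tauMap_smul hσ

theorem FL_eq_map (hσ : IsWittFrobenius p 𝔽 σ) (hF : IsFrobeniusMap p 𝔽 σ B F)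
    (M : Submodule (Wp p 𝔽) (Nn p 𝔽)) : FL p 𝔽 F M = M.map (hF.semilinearMap hσ) := by
  rw [← Submodule.span_eq M, ← Submodule.span_image, Submodule.span_eq]
  rfl

theorem tauL_eq_map (hσ : IsWittFrobenius p 𝔽 σ) (hF : IsFrobeniusMap p 𝔽 σ B F)
    (M : Submodule (Wp p 𝔽) (Nn p 𝔽)) : tauL p 𝔽 F M = M.map (hF.tauSemilinearMap hσ) := by
  rw [← Submodule.span_eq M, ← Submodule.span_image, Submodule.span_eq]
  rfl

omit [IsAlgClosed 𝔽] in
theorem natCast_smul_tauMap (x : Nn p 𝔽) : (p : Wp p 𝔽) • tauMap p 𝔽 F x = F (F x) := by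
  have hp : (p : Kp p 𝔽) ≠ 0 := by
    rw [← map_natCast (algebraMap (Wp p 𝔽) (Kp p 𝔽))]
    exact IsFractionRing.to_map_ne_zero_of_mem_nonZeroDivisors
      (mem_nonZeroDivisors_of_ne_zero (WittVector.p_nonzero p 𝔽))
  rw [← algebraMap_smul (Kp p 𝔽), map_natCast, tauMap, smul_inv_smul₀ hp]

/-- Let `(L₀, L₂)` and `(L₀′, L₂′)` be pairs of `τ`-stable
lattices with `L₀ = L₀^⊥`, `L₀′ = (L₀′)^⊥`, `L₂ = pL₂^⊥`, `L₂′ = p(L₂′)^⊥`,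
`L₂ ⊆ L₀`, `L₂′ ⊆ L₀′`, and `(L₀, L₂) ≠ (L₀′, L₂′)`. If `M ∈ ℳ(𝔽)` satisfies
`L₂ ⊆ M ⊆ L₀` and `L₂′ ⊆ M ⊆ L₀′`, then `M` is `τ`-stable (hence superspecial);
moreover if `L₀ ≠ L₀′` then `M = L₀ ∩ L₀′`, and if `L₂ ≠ L₂′` then
`M = L₂ + L₂′`. -/
theorem intersection_of_paramodular_strata
    (p : ℕ) [Fact p.Prime] (hp : Odd p)
    (𝔽 : Type) [Field 𝔽] [IsAlgClosed 𝔽] [CharP 𝔽 p]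
    (σ : Kp p 𝔽 ≃+* Kp p 𝔽) (hσ : IsWittFrobenius p 𝔽 σ)
    (B : LinearMap.BilinForm (Kp p 𝔽) (Nn p 𝔽)) (halt : B.IsAlt)
    (hnd : B.Nondegenerate)
    (F : Nn p 𝔽 → Nn p 𝔽) (hF : IsFrobeniusMap p 𝔽 σ B F)
    (L₀ L₂ L₀' L₂' : Submodule (Wp p 𝔽) (Nn p 𝔽))
    (h0 : IsLattice p 𝔽 L₀) (hτ0 : tauL p 𝔽 F L₀ = L₀)
    (hd0 : L₀ = dualB p 𝔽 B L₀)
    (h0' : IsLattice p 𝔽 L₀') (hτ0' : tauL p 𝔽 F L₀' = L₀')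
    (hd0' : L₀' = dualB p 𝔽 B L₀')
    (h2 : IsLattice p 𝔽 L₂) (hτ2 : tauL p 𝔽 F L₂ = L₂)
    (hd2 : L₂ = (p : Wp p 𝔽) • dualB p 𝔽 B L₂)
    (h2' : IsLattice p 𝔽 L₂') (hτ2' : tauL p 𝔽 F L₂' = L₂')
    (hd2' : L₂' = (p : Wp p 𝔽) • dualB p 𝔽 B L₂')
    (h20 : L₂ ≤ L₀) (h20' : L₂' ≤ L₀')
    (hne : (L₀, L₂) ≠ (L₀', L₂'))
    (M : Submodule (Wp p 𝔽) (Nn p 𝔽)) (hM : memM p 𝔽 B F M)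
    (hM2 : L₂ ≤ M) (hM0 : M ≤ L₀) (hM2' : L₂' ≤ M) (hM0' : M ≤ L₀') :
    tauL p 𝔽 F M = M ∧
    FL p 𝔽 F (FL p 𝔽 F M) = (p : Wp p 𝔽) • M ∧
    (L₀ ≠ L₀' → M = L₀ ⊓ L₀') ∧
    (L₂ ≠ L₂' → M = L₂ ⊔ L₂') := by
  obtain ⟨-, -, -, hM_below, hM_above⟩ := hM
  simp only [tauL_eq_map hσ hF] at hτ0 hτ0' hτ2 hτ2' ⊢
  simp only [FL_eq_map hσ hF]
  simp only [dualB_eq_dualSubmodule] at hd0 hd0' hd2 hd2' hM_below hM_above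
  exact intersection_of_paramodular_strata_general B (f := hF.semilinearMap hσ) hF.1.injective
    natCast_smul_tauMap hτ0 hd0 hτ0' hd0' hτ2 hd2 hτ2' hd2' hne hM_above.krullDim_Icc.le
    hM_below.krullDim_Icc.le hM2 hM0 hM2' hM0'

end
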